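/- Let k, μ, s ∈ ℂ with μ + s ≠ 0, s ∉ ℤ, and 2−s not a nonpositive integer. Define y₄(x) = (x(x−1)/(μ+s))·((1−s)/x − k/(1−x) + ((k−s+1)(1−μ−s)/(2−s))·F(k−s+2, 2−μ−s, 3−s, x)/F(k−s+1, 1−μ−s, 2−s, x)). Let U ⊆ ℂ be an open subset of the unit disc {|x| < 1} on which x ≠ 0, x ≠ 1, F(k−s+1, 1−μ−s, 2−s, x) ≠ 0, and y₄(x) ∉ {0, 1, x}. Then y₄ solves P_VI((μ+s)²/2, −k²/2, (μ+1)²/2, (1−(k−s)²)/2) on U. -/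

import Mathlib

/-- `y` solves the Painlevé VI equation with parameters `(α, β, γ, δ)` on `U`:
`y` is twice differentiable on `U`, and at every `x ∈ U` we have `x ≠ 0`, `x ≠ 1`,
`y x ∉ {0, 1, x}` and the Painlevé VI equation holds. -/
def SolvesPVI (α β γ δ : ℂ) (U : Set ℂ) (y : ℂ → ℂ) : Prop :=
  (∀ x ∈ U, DifferentiableAt ℂ y x) ∧
  (∀ x ∈ U, DifferentiableAt ℂ (deriv y) x) ∧
  ∀ x ∈ U, x ≠ 0 ∧ x ≠ 1 ∧ y x ≠ 0 ∧ y x ≠ 1 ∧ y x ≠ x ∧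
    deriv (deriv y) x =
      (1 / 2) * (1 / y x + 1 / (y x - 1) + 1 / (y x - x)) * (deriv y x) ^ 2
        - (1 / x + 1 / (x - 1) + 1 / (y x - x)) * deriv y x
        + (y x * (y x - 1) * (y x - x) / (x ^ 2 * (x - 1) ^ 2)) *
            (α + β * x / (y x) ^ 2 + γ * (x - 1) / (y x - 1) ^ 2
              + δ * x * (x - 1) / (y x - x) ^ 2)

/-- The Gauss hypergeometric series `F(a, b, c, x) = Σ (a)ₙ(b)ₙ/(c)ₙ · xⁿ/n!`,
where `(a)ₙ` is the ascending Pochhammer symbol. -/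
noncomputable def hypF (a b c x : ℂ) : ℂ :=
  ∑' n : ℕ,
    ((ascPochhammer ℂ n).eval a * (ascPochhammer ℂ n).eval b / (ascPochhammer ℂ n).eval c)
      * x ^ n / (n.factorial : ℂ)

/-- The solution `y₄(k, μ, s)`, built from the second solution of the
hypergeometric equation. -/
noncomputable def y4 (k μ s : ℂ) : ℂ → ℂ := fun x =>
  (x * (x - 1) / (μ + s)) *
    ((1 - s) / x - k / (1 - x)
      + ((k - s + 1) * (1 - μ - s) / (2 - s))
          * hypF (k - s + 2) (2 - μ - s) (3 - s) x
          / hypF (k - s + 1) (1 - μ - s) (2 - s) x)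

/-! The logarithmic derivative of a solution of Gauss' hypergeometric equation satisfies a Riccati
equation. After the affine change `y = x (x - 1) / (μ + s) * ((1 - s) / x - k / (1 - x) + u' / u)`
it becomes `x (x - 1) y' = a y (y - 1) + b (x - 1) y + c (y - x)`. Differentiating it once and
substituting it back shows that a solution of the latter solves Painlevé VI with
parameters `(a² / 2, -c² / 2, (b - c)² / 2, (1 - (a + b - 1)²) / 2)`. -/

section PowerSeries

theorem mem_eball_zero_one_iff {E : Type*} [SeminormedAddGroup E] {x : E} :
    x ∈ Metric.eball 0 1 ↔ ‖x‖ < 1 := by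
  rw [← ENNReal.ofReal_one, Metric.eball_ofReal, mem_ball_zero_iff]

theorem hasSum_mul_pow_of_hasSum_succ {R : Type*} [CommRing R] [TopologicalSpace R]
    [IsTopologicalRing R] {v : ℕ → R} {x S : R} (hv : v 0 = 0)
    (h : HasSum (fun n ↦ v (n + 1) * x ^ n) S) : HasSum (fun n ↦ v n * x ^ n) (x * S) := by
  rw [← hasSum_nat_add_iff' 1]
  simpa [hv, pow_succ', mul_left_comm] using h.mul_left x

variable {𝕜 : Type*} [NontriviallyNormedField 𝕜] {f : 𝕜 → 𝕜} {u : ℕ → 𝕜} {r : ENNReal}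

theorem hasSum_mul_pow_of_hasFPowerSeriesOnBall {x : 𝕜}
    (hf : HasFPowerSeriesOnBall f (FormalMultilinearSeries.ofScalars 𝕜 u) 0 r)
    (hx : x ∈ Metric.eball 0 r) : HasSum (fun n ↦ u n * x ^ n) (f x) := by
  simpa [mul_comm] using hf.hasSum hx

theorem hasFPowerSeriesOnBall_deriv_ofScalars [CompleteSpace 𝕜] {z : 𝕜}
    (hf : HasFPowerSeriesOnBall f (FormalMultilinearSeries.ofScalars 𝕜 u) z r) :
    HasFPowerSeriesOnBall (deriv f)
      (FormalMultilinearSeries.ofScalars 𝕜 fun n ↦ ((n : 𝕜) + 1) * u (n + 1)) z r := by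
  have hderiv := (ContinuousLinearMap.apply 𝕜 𝕜 (1 : 𝕜)).comp_hasFPowerSeriesOnBall hf.fderiv
  convert hderiv using 1
  · ext w
    simp
  · ext n
    simp

end PowerSeries

section HypergeometricEquation

/-- `u` is a twice differentiable solution at `x` of Gauss' hypergeometric equation
`x (1 - x) u'' + (c - (a + b + 1) x) u' - a b u = 0`. -/
structure IsHypergeometricAt {𝕜 : Type*} [NontriviallyNormedField 𝕜] (a b c : 𝕜) (u : 𝕜 → 𝕜)
    (x : 𝕜) : Prop where
  differentiableAt : DifferentiableAt 𝕜 u x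
  differentiableAt_deriv : DifferentiableAt 𝕜 (deriv u) x
  equation : x * (1 - x) * deriv (deriv u) x + (c - (a + b + 1) * x) * deriv u x
    - a * b * u x = 0

theorem ordinaryHypergeometricCoefficient_succ_eq_shift {𝕂 : Type*} [Field 𝕂] [CharZero 𝕂]
    (a b c : 𝕂) (n : ℕ) :
    ((n : 𝕂) + 1) * ordinaryHypergeometricCoefficient a b c (n + 1) =
      a * b / c * ordinaryHypergeometricCoefficient (a + 1) (b + 1) (c + 1) n := by
  have hn : (n : 𝕂) + 1 ≠ 0 := n.cast_add_one_ne_zero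
  have hpoch (z : 𝕂) :
      (ascPochhammer 𝕂 (n + 1)).eval z = z * (ascPochhammer 𝕂 n).eval (z + 1) := by
    simp [ascPochhammer_succ_left]
  simp only [ordinaryHypergeometricCoefficient, hpoch, Nat.factorial_succ, Nat.cast_mul,
    Nat.cast_succ, mul_inv]
  field_simp

theorem ordinaryHypergeometricCoefficient_succ_recurrence {𝕂 : Type*} [Field 𝕂] [CharZero 𝕂]
    (a b : 𝕂) {c : 𝕂} {n : ℕ} (hc : c + n ≠ 0) :
    ((n : 𝕂) + 1) * (c + n) * ordinaryHypergeometricCoefficient a b c (n + 1) =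
      (a + n) * (b + n) * ordinaryHypergeometricCoefficient a b c n := by
  have hn : (n : 𝕂) + 1 ≠ 0 := n.cast_add_one_ne_zero
  simp only [ordinaryHypergeometricCoefficient, ascPochhammer_succ_eval, Nat.factorial_succ,
    Nat.cast_mul, Nat.cast_succ, mul_inv]
  field_simp

variable {𝕂 : Type*} [RCLike 𝕂]

theorem one_le_radius_ordinaryHypergeometricSeries (𝔸 : Type*) [NormedDivisionRing 𝔸]
    [NormedAlgebra 𝕂 𝔸] (a b c : 𝕂) : 1 ≤ (ordinaryHypergeometricSeries 𝔸 a b c).radius := by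
  by_cases h : ∀ n : ℕ, (n : 𝕂) ≠ -a ∧ (n : 𝕂) ≠ -b ∧ (n : 𝕂) ≠ -c
  · exact (ordinaryHypergeometricSeries_radius_eq_one 𝔸 a b c h).ge
  obtain ⟨n, hn⟩ : ∃ n : ℕ, a = -n ∨ b = -n ∨ c = -n := by
    simpa only [not_forall, not_and_or, not_not, eq_neg_iff_add_eq_zero, add_comm] using h
  obtain rfl | rfl | rfl := hn
  · simp [ordinaryHypergeometric_radius_top_of_neg_nat₁]
  · simp [ordinaryHypergeometric_radius_top_of_neg_nat₂]
  · simp [ordinaryHypergeometric_radius_top_of_neg_nat₃]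

theorem hasFPowerSeriesOnBall_ordinaryHypergeometric (𝔸 : Type*) [NormedDivisionRing 𝔸]
    [NormedAlgebra 𝕂 𝔸] [CompleteSpace 𝔸] (a b c : 𝕂) :
    HasFPowerSeriesOnBall (₂F₁ a b c : 𝔸 → 𝔸) (ordinaryHypergeometricSeries 𝔸 a b c) 0 1 :=
  have hr := one_le_radius_ordinaryHypergeometricSeries 𝔸 a b c
  (FormalMultilinearSeries.hasFPowerSeriesOnBall _ (one_pos.trans_le hr)).mono one_pos hr

theorem hasDerivAt_ordinaryHypergeometric (a b c : 𝕂) {x : 𝕂} (hx : ‖x‖ < 1) :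
    HasDerivAt (₂F₁ a b c) (a * b / c * ₂F₁ (a + 1) (b + 1) (c + 1) x) x := by
  have hx' := mem_eball_zero_one_iff.2 hx
  have hF := hasFPowerSeriesOnBall_ordinaryHypergeometric 𝕂 a b c
  have hderiv := hasSum_mul_pow_of_hasFPowerSeriesOnBall
    (hasFPowerSeriesOnBall_deriv_ofScalars hF) hx'
  have hshift := (hasSum_mul_pow_of_hasFPowerSeriesOnBall
    (hasFPowerSeriesOnBall_ordinaryHypergeometric 𝕂 (a + 1) (b + 1) (c + 1)) hx').mul_left
    (a * b / c)
  simp only [ordinaryHypergeometricCoefficient_succ_eq_shift, mul_assoc (a * b / c)] at hderiv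
  rw [hshift.unique hderiv]
  exact (hF.analyticAt_of_mem hx').differentiableAt.hasDerivAt

theorem isHypergeometricAt_ordinaryHypergeometric (a b : 𝕂) {c : 𝕂} (hc : ∀ m : ℕ, c ≠ -(m : 𝕂))
    {x : 𝕂} (hx : ‖x‖ < 1) : IsHypergeometricAt a b c (₂F₁ a b c) x := by
  have hx' := mem_eball_zero_one_iff.2 hx
  have hF := hasFPowerSeriesOnBall_ordinaryHypergeometric 𝕂 a b c
  have hF₁ := hasFPowerSeriesOnBall_deriv_ofScalars hF
  have hF₂ := hasFPowerSeriesOnBall_deriv_ofScalars hF₁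
  refine ⟨(hF.analyticAt_of_mem hx').differentiableAt,
    (hF₁.analyticAt_of_mem hx').differentiableAt, ?_⟩
  set u := ordinaryHypergeometricCoefficient a b c
  have sum_F : HasSum (fun n ↦ u n * x ^ n) (₂F₁ a b c x) :=
    hasSum_mul_pow_of_hasFPowerSeriesOnBall hF hx'
  have sum_F₁ := hasSum_mul_pow_of_hasFPowerSeriesOnBall hF₁ hx'
  have sum_F₂ := hasSum_mul_pow_of_hasFPowerSeriesOnBall hF₂ hx'
  have sum_xF₁ : HasSum (fun n : ℕ ↦ n * u n * x ^ n) (x * deriv (₂F₁ a b c) x) :=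
    hasSum_mul_pow_of_hasSum_succ (by simp) (by simpa using sum_F₁)
  have sum_xF₂ : HasSum (fun n : ℕ ↦ n * ((n + 1) * u (n + 1)) * x ^ n)
      (x * deriv (deriv (₂F₁ a b c)) x) :=
    hasSum_mul_pow_of_hasSum_succ (by simp) (by simpa using sum_F₂)
  have sum_xxF₂ : HasSum (fun n : ℕ ↦ (n - 1) * (n * u n) * x ^ n)
      (x * (x * deriv (deriv (₂F₁ a b c)) x)) :=
    hasSum_mul_pow_of_hasSum_succ (by simp) (by simpa using sum_xF₂)
  have sum_equation := (((sum_xF₂.sub sum_xxF₂).add (sum_F₁.mul_left c)).sub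
    (sum_xF₁.mul_left (a + b + 1))).sub (sum_F.mul_left (a * b))
  have coeff_eq_zero (n : ℕ) : n * ((n + 1) * u (n + 1)) * x ^ n - (n - 1) * (n * u n) * x ^ n
      + c * ((n + 1) * u (n + 1) * x ^ n) - (a + b + 1) * (n * u n * x ^ n)
      - a * b * (u n * x ^ n) = 0 := by
    have hcn : c + n ≠ 0 := fun h ↦ hc n (eq_neg_of_add_eq_zero_left h)
    linear_combination x ^ n * ordinaryHypergeometricCoefficient_succ_recurrence a b hcn
  simp only [coeff_eq_zero] at sum_equation
  linear_combination sum_equation.unique hasSum_zero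

end HypergeometricEquation

section Riccati

/-- The right-hand side of the Riccati equation `y' = pviRiccati a b c x y` whose solutions solve
Painlevé VI. Up to factors depending only on `x`, the numerator, a quadratic polynomial in `y`, has
leading coefficient `a` and takes the values `-c`, `b - c`, `a + b` at `y = 0, 1, x`; these give
the four parameters of Painlevé VI. -/
def pviRiccati {K : Type*} [Field K] (a b c x y : K) : K :=
  (a * y * (y - 1) + b * (x - 1) * y + c * (y - x)) / (x * (x - 1))

theorem IsHypergeometricAt.hasDerivAt_logDeriv {𝕜 : Type*} [NontriviallyNormedField 𝕜]
    {a b c : 𝕜} {u : 𝕜 → 𝕜} {x : 𝕜} (hu : IsHypergeometricAt a b c u x) (hx₀ : x ≠ 0)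
    (hx₁ : x ≠ 1) (hux : u x ≠ 0) :
    HasDerivAt (logDeriv u)
      ((a * b - (c - (a + b + 1) * x) * logDeriv u x) / (x * (1 - x)) - logDeriv u x ^ 2) x := by
  have hx₁' : 1 - x ≠ 0 := sub_ne_zero.2 hx₁.symm
  refine (hu.differentiableAt_deriv.hasDerivAt.div
    hu.differentiableAt.hasDerivAt hux).congr_deriv ?_
  rw [logDeriv_apply]
  field_simp
  linear_combination u x * hu.equation

theorem IsHypergeometricAt.hasDerivAt_pviRiccati {𝕜 : Type*} [NontriviallyNormedField 𝕜]
    {k μ s : 𝕜} {u : 𝕜 → 𝕜} {x : 𝕜}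
    (hu : IsHypergeometricAt (k - s + 1) (1 - μ - s) (2 - s) u x) (hμs : μ + s ≠ 0)
    (hx₀ : x ≠ 0) (hx₁ : x ≠ 1) (hux : u x ≠ 0) {y : 𝕜 → 𝕜}
    (hy : y =ᶠ[nhds x] fun z ↦ z * (z - 1) / (μ + s) *
      ((1 - s) / z - k / (1 - z) + logDeriv u z)) :
    HasDerivAt y (pviRiccati (-(μ + s)) (k + μ + 1) k x (y x)) x := by
  have hx₁' : 1 - x ≠ 0 := sub_ne_zero.2 hx₁.symm
  have hx₁'' : x - 1 ≠ 0 := sub_ne_zero.2 hx₁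
  have hid := hasDerivAt_id' x
  have hprefactor := (hid.mul (hid.sub_const 1)).div_const (μ + s)
  have hlog := ((((hasDerivAt_const x (1 - s)).div hid hx₀).sub
    ((hasDerivAt_const x k).div (hid.const_sub 1) hx₁')).add
    (hu.hasDerivAt_logDeriv hx₀ hx₁ hux))
  refine ((hprefactor.mul hlog).congr_of_eventuallyEq hy).congr_deriv ?_
  rw [hy.eq_of_nhds, pviRiccati]
  simp only [Pi.add_apply, Pi.sub_apply, Pi.mul_apply, Pi.div_apply]
  rw [← neg_sub x 1] at hx₁' ⊢
  field_simp
  ring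

theorem hasDerivAt_deriv_of_pviRiccati {𝕜 : Type*} [NontriviallyNormedField 𝕜] {a b c x : 𝕜}
    {y : 𝕜 → 𝕜} (hx₀ : x ≠ 0) (hx₁ : x ≠ 1)
    (hy : ∀ᶠ z in nhds x, HasDerivAt y (pviRiccati a b c z (y z)) z) :
    HasDerivAt (deriv y)
      (((a * (2 * y x - 1) + b * (x - 1) + c - (2 * x - 1)) * deriv y x + b * y x - c)
        / (x * (x - 1))) x := by
  have hx₁' : x - 1 ≠ 0 := sub_ne_zero.2 hx₁
  have hid := hasDerivAt_id' x
  have hyx := hy.self_of_nhds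
  have hnum := (((hyx.const_mul a).mul (hyx.sub_const 1)).add
    (((hid.sub_const 1).const_mul b).mul hyx)).add ((hyx.sub hid).const_mul c)
  have hquot := hnum.div (hid.mul (hid.sub_const 1)) (mul_ne_zero hx₀ hx₁')
  refine (hquot.congr_of_eventuallyEq (hy.mono fun z hz ↦ hz.deriv)).congr_deriv ?_
  rw [hyx.deriv, pviRiccati]
  simp only [Pi.add_apply, Pi.sub_apply, Pi.mul_apply]
  field_simp
  ring

theorem painleveVI_eq_of_pviRiccati {K : Type*} [Field K] [NeZero (2 : K)]
    {a b c x y y' y'' : K} (hx₀ : x ≠ 0) (hx₁ : x ≠ 1) (hy₀ : y ≠ 0) (hy₁ : y ≠ 1) (hyx : y ≠ x)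
    (hy' : y' = pviRiccati a b c x y)
    (hy'' : y'' = ((a * (2 * y - 1) + b * (x - 1) + c - (2 * x - 1)) * y' + b * y - c)
      / (x * (x - 1))) :
    y'' =
      (1 / 2) * (1 / y + 1 / (y - 1) + 1 / (y - x)) * y' ^ 2
        - (1 / x + 1 / (x - 1) + 1 / (y - x)) * y'
        + (y * (y - 1) * (y - x) / (x ^ 2 * (x - 1) ^ 2)) *
            (a ^ 2 / 2 + -c ^ 2 / 2 * x / y ^ 2 + (b - c) ^ 2 / 2 * (x - 1) / (y - 1) ^ 2
              + (1 - (a + b - 1) ^ 2) / 2 * x * (x - 1) / (y - x) ^ 2) := by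
  have hx₁' : x - 1 ≠ 0 := sub_ne_zero.2 hx₁
  have hy₁' : y - 1 ≠ 0 := sub_ne_zero.2 hy₁
  have hyx' : y - x ≠ 0 := sub_ne_zero.2 hyx
  rw [hy'', hy', pviRiccati]
  field_simp
  ring

theorem solvesPVI_of_pviRiccati {a b c : ℂ} {U : Set ℂ} {y : ℂ → ℂ} (hU : IsOpen U)
    (hreg : ∀ x ∈ U, x ≠ 0 ∧ x ≠ 1 ∧ y x ≠ 0 ∧ y x ≠ 1 ∧ y x ≠ x)
    (hy : ∀ x ∈ U, HasDerivAt y (pviRiccati a b c x (y x)) x) :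
    SolvesPVI (a ^ 2 / 2) (-c ^ 2 / 2) ((b - c) ^ 2 / 2) ((1 - (a + b - 1) ^ 2) / 2) U y := by
  have hy' (x) (hx : x ∈ U) := hasDerivAt_deriv_of_pviRiccati (hreg x hx).1 (hreg x hx).2.1
    (Filter.eventually_of_mem (hU.mem_nhds hx) hy)
  refine ⟨fun x hx ↦ (hy x hx).differentiableAt, fun x hx ↦ (hy' x hx).differentiableAt,
    fun x hx ↦ ?_⟩
  obtain ⟨hx₀, hx₁, hy₀, hy₁, hyx⟩ := hreg x hx
  refine ⟨hx₀, hx₁, hy₀, hy₁, hyx, ?_⟩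
  exact painleveVI_eq_of_pviRiccati hx₀ hx₁ hy₀ hy₁ hyx (hy x hx).deriv (hy' x hx).deriv

end Riccati

theorem hypF_eq_ordinaryHypergeometric (a b c : ℂ) : hypF a b c = ₂F₁ a b c := by
  rw [ordinaryHypergeometric_eq_tsum]
  funext x
  refine tsum_congr fun n ↦ ?_
  rw [smul_eq_mul]
  ring

theorem y4_eq_logDeriv (k μ s : ℂ) {x : ℂ} (hx : ‖x‖ < 1) :
    y4 k μ s x = x * (x - 1) / (μ + s) *
      ((1 - s) / x - k / (1 - x) + logDeriv (hypF (k - s + 1) (1 - μ - s) (2 - s)) x) := by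
  have hderiv := (hasDerivAt_ordinaryHypergeometric (k - s + 1) (1 - μ - s) (2 - s) hx).deriv
  rw [y4, logDeriv_apply]
  simp only [hypF_eq_ordinaryHypergeometric, hderiv]
  ring_nf

theorem y4_solves_painleveVI_general (k μ s : ℂ) (hμs : μ + s ≠ 0)
    (h2s : ∀ m : ℕ, 2 - s ≠ -(m : ℂ))
    (U : Set ℂ) (hU : IsOpen U) (hUball : U ⊆ Metric.ball (0 : ℂ) 1)
    (hreg : ∀ x ∈ U, x ≠ 0 ∧ x ≠ 1 ∧ hypF (k - s + 1) (1 - μ - s) (2 - s) x ≠ 0 ∧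
      y4 k μ s x ≠ 0 ∧ y4 k μ s x ≠ 1 ∧ y4 k μ s x ≠ x) :
    SolvesPVI ((μ + s) ^ 2 / 2) (-k ^ 2 / 2) ((μ + 1) ^ 2 / 2)
      ((1 - (k - s) ^ 2) / 2) U (y4 k μ s) := by
  have hriccati : ∀ x ∈ U,
      HasDerivAt (y4 k μ s) (pviRiccati (-(μ + s)) (k + μ + 1) k x (y4 k μ s x)) x := by
    intro x hx
    obtain ⟨hx₀, hx₁, hF, -⟩ := hreg x hx
    have hgauss : IsHypergeometricAt (k - s + 1) (1 - μ - s) (2 - s)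
        (hypF (k - s + 1) (1 - μ - s) (2 - s)) x := by
      rw [hypF_eq_ordinaryHypergeometric]
      exact isHypergeometricAt_ordinaryHypergeometric _ _ h2s (mem_ball_zero_iff.1 (hUball hx))
    exact hgauss.hasDerivAt_pviRiccati hμs hx₀ hx₁ hF <|
      Filter.eventually_of_mem (hU.mem_nhds hx) fun z hz ↦
        y4_eq_logDeriv k μ s (mem_ball_zero_iff.1 (hUball hz))
  have hpvi := solvesPVI_of_pviRiccati hU
    (fun x hx ↦ have ⟨hx₀, hx₁, _, hy⟩ := hreg x hx; ⟨hx₀, hx₁, hy⟩) hriccati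
  convert hpvi using 2 <;> ring

/-- **Case 2** `a = -(μ+s)` for the second hypergeometric solution: `y₄` solves
`P_VI((μ+s)²/2, -k²/2, (μ+1)²/2, (1-(k-s)²)/2)`. -/
theorem y4_solves_painleveVI (k μ s : ℂ) (hμs : μ + s ≠ 0)
    (hsZ : ∀ m : ℤ, s ≠ (m : ℂ)) (h2s : ∀ m : ℕ, 2 - s ≠ -(m : ℂ))
    (U : Set ℂ) (hU : IsOpen U) (hUball : U ⊆ Metric.ball (0 : ℂ) 1)
    (hreg : ∀ x ∈ U, x ≠ 0 ∧ x ≠ 1 ∧ hypF (k - s + 1) (1 - μ - s) (2 - s) x ≠ 0 ∧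
      y4 k μ s x ≠ 0 ∧ y4 k μ s x ≠ 1 ∧ y4 k μ s x ≠ x) :
    SolvesPVI ((μ + s) ^ 2 / 2) (-k ^ 2 / 2) ((μ + 1) ^ 2 / 2)
      ((1 - (k - s) ^ 2) / 2) U (y4 k μ s) :=
  y4_solves_painleveVI_general k μ s hμs h2s U hU hUball hreg
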